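/- Let α be a quadratic Pisot unit with α ≥ 3, i.e. α = (b+√(b²−4))/2 with an integer b ≥ 4 or α = (b+√(b²+4))/2 with an integer b ≥ 3. Then there exists a real number κ < 1/2 such that the whole interval [κ, 1/2] is contained in 𝓛(α). In particular, 𝓛(α) has positive Lebesgue measure. -/

import Mathlib

/-- Distance from `x` to the nearest integer. -/
noncomputable def distNearestInt (x : ℝ) : ℝ := |x - round x|

/-- `limsup_{n→∞} ‖ξ·α^n‖`. -/
noncomputable def limsupDist (α ξ : ℝ) : ℝ :=
  Filter.limsup (fun n : ℕ => distNearestInt (ξ * α ^ n)) Filter.atTop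

/-- The multiplicative Markoff–Lagrange spectrum `𝓛(α)`. -/
noncomputable def specL (α : ℝ) : Set ℝ := {l : ℝ | ∃ ξ : ℝ, limsupDist α ξ = l}

/-- One-sided weighted sum. -/
noncomputable def SS (q : ℝ) (y : ℕ → ℝ) : ℝ := ∑' i, y i * q ^ (i + 1)

/-- Two-sided weighted sum centred at `n`. -/
noncomputable def EE (q c : ℝ) (x : ℤ → ℤ) (n : ℤ) : ℝ :=
  x n + SS q (fun i => (x (n + 1 + i) : ℝ)) + SS q (fun i => c ^ (i + 1) * (x (n - 1 - i) : ℝ))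

lemma SS_summable {q C : ℝ} (h0 : 0 < q) (h1 : q < 1) {y : ℕ → ℝ} (hy : ∀ i, |y i| ≤ C) :
    Summable (fun i => y i * q ^ (i + 1)) := by
  have hg : Summable (fun i : ℕ => C * q * q ^ i) :=
    (summable_geometric_of_lt_one h0.le h1).mul_left _
  refine Summable.of_norm_bounded hg (fun i => ?_)
  rw [Real.norm_eq_abs, abs_mul, abs_of_pos (pow_pos h0 _), pow_succ]
  have := mul_le_mul_of_nonneg_right (hy i) (pow_pos h0 (i+1)).le
  calc _ = |y i| * q ^ (i+1) := by ring
    _ ≤ _ := this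
    _ = _ := by ring

lemma SS_rec {q C : ℝ} (h0 : 0 < q) (h1 : q < 1) {y : ℕ → ℝ} (hy : ∀ i, |y i| ≤ C) :
    SS q y = q * (y 0 + SS q (fun i => y (i + 1))) := by
  unfold SS
  rw [(SS_summable h0 h1 hy).tsum_eq_zero_add, mul_add, ← tsum_mul_left]
  congr 1
  · ring
  · congr 1; ext i; ring

lemma SS_abs {q C : ℝ} (h0 : 0 < q) (h1 : q < 1) {y : ℕ → ℝ} (hy : ∀ i, |y i| ≤ C) :
    |SS q y| ≤ C * (q / (1 - q)) := by
  have hg : HasSum (fun i : ℕ => C * q * q ^ i) (C * q * (1 - q)⁻¹) :=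
    (hasSum_geometric_of_lt_one h0.le h1).mul_left _
  have := tsum_of_norm_bounded hg (f := fun i => y i * q ^ (i + 1)) (fun i => by
    rw [Real.norm_eq_abs, abs_mul, abs_of_pos (pow_pos h0 _)]
    calc _ ≤ C * q ^ (i+1) := mul_le_mul_of_nonneg_right (hy i) (pow_pos h0 (i+1)).le
      _ = _ := by ring)
  rw [Real.norm_eq_abs] at this
  calc _ ≤ _ := this
    _ = _ := by rw [div_eq_mul_inv]; ring

lemma SS_sub {q C C' : ℝ} (h0 : 0 < q) (h1 : q < 1) {y z : ℕ → ℝ} (hy : ∀ i, |y i| ≤ C)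
    (hz : ∀ i, |z i| ≤ C') : SS q y - SS q z = SS q (fun i => y i - z i) := by
  unfold SS
  rw [← (SS_summable h0 h1 hy).tsum_sub (SS_summable h0 h1 hz)]
  congr 1; ext i; ring

lemma SS_add {q C C' : ℝ} (h0 : 0 < q) (h1 : q < 1) {y z : ℕ → ℝ} (hy : ∀ i, |y i| ≤ C)
    (hz : ∀ i, |z i| ≤ C') : SS q y + SS q z = SS q (fun i => y i + z i) := by
  unfold SS
  rw [← (SS_summable h0 h1 hy).tsum_add (SS_summable h0 h1 hz)]
  congr 1; ext i; ring

lemma SS_mul {q a : ℝ} {y : ℕ → ℝ} : SS q (fun i => a * y i) = a * SS q y := by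
  unfold SS
  rw [← tsum_mul_left]
  congr 1; ext i; ring

lemma SS_tail {q C : ℝ} (h0 : 0 < q) (h1 : q < 1) (R : ℕ) : ∀ {y : ℕ → ℝ}, (∀ i, |y i| ≤ C) →
    (∀ i < R, y i = 0) → |SS q y| ≤ C * (q / (1 - q)) * q ^ R := by
  induction R with
  | zero => intro y hy _; simpa using SS_abs h0 h1 hy
  | succ R ih =>
    intro y hy hz
    rw [SS_rec h0 h1 hy, hz 0 (by omega), zero_add, abs_mul, abs_of_pos h0]
    have := ih (y := fun i => y (i+1)) (fun i => hy _) (fun i hi => hz _ (by omega))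
    calc _ ≤ q * (C * (q / (1 - q)) * q ^ R) := mul_le_mul_of_nonneg_left this h0.le
      _ = _ := by ring

/-- bound with one exceptional index -/
lemma SS_exc {q m A : ℝ} (h0 : 0 < q) (h1 : q < 1) (hA : m ≤ A) (R : ℕ) : ∀ {y : ℕ → ℝ},
    (∀ i, i ≠ R → |y i| ≤ m) → |y R| ≤ A →
    |SS q y| ≤ m * (q / (1 - q)) + (A - m) * q ^ (R + 1) := by
  induction R with
  | zero =>
    intro y hy hR
    have hb : ∀ i, |y i| ≤ A := fun i => by
      by_cases h : i = 0
      · rw [h]; exact hR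
      · exact (hy i h).trans hA
    rw [SS_rec h0 h1 hb, abs_mul, abs_of_pos h0]
    have := SS_abs h0 h1 (y := fun i => y (i+1)) (C := m) (fun i => hy _ (by omega))
    have h3 := abs_add_le (y 0) (SS q (fun i => y (i+1)))
    have h4 : |y 0 + SS q (fun i => y (i+1))| ≤ A + m * (q / (1-q)) := by linarith
    calc _ ≤ q * (A + m * (q / (1-q))) := mul_le_mul_of_nonneg_left h4 h0.le
      _ = _ := by
        have : 1 - q ≠ 0 := by linarith
        field_simp; ring
  | succ R ih =>
    intro y hy hR
    have hb : ∀ i, |y i| ≤ A := fun i => by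
      by_cases h : i = R + 1
      · rw [h]; exact hR
      · exact (hy i h).trans hA
    rw [SS_rec h0 h1 hb, abs_mul, abs_of_pos h0]
    have := ih (y := fun i => y (i+1)) (fun i hi => hy _ (by omega)) hR
    have h3 := abs_add_le (y 0) (SS q (fun i => y (i+1)))
    have h5 := hy 0 (by omega)
    have h4 : |y 0 + SS q (fun i => y (i+1))| ≤ m + (m * (q / (1 - q)) + (A - m) * q ^ (R + 1)) := by
      linarith
    calc _ ≤ q * (m + (m * (q / (1 - q)) + (A - m) * q ^ (R + 1))) :=
          mul_le_mul_of_nonneg_left h4 h0.le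
      _ = _ := by
        have : 1 - q ≠ 0 := by linarith
        field_simp; ring

lemma cpow_abs {c : ℝ} (hc : |c| = 1) (i : ℕ) (z : ℝ) : |c ^ i * z| = |z| := by
  rw [abs_mul, abs_pow, hc, one_pow, one_mul]

/-- integrality -/
lemma rep {α q c D b C : ℝ} (h0 : 0 < q) (h1 : q < 1) (hq : α * q = 1) (hc : |c| = 1)
    (hb : α + c * q = b) (hD : D = α - c * q) (hD0 : D ≠ 0) (bz cz : ℤ) (hbz : b = bz)
    (hcz : c = cz) (x : ℤ → ℤ)
    (hx : ∀ n, |(x n : ℝ)| ≤ C) (hneg : ∀ n < 0, x n = 0) :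
    ∃ ξ : ℝ, ∀ n : ℕ, ∃ N : ℤ, ξ * α ^ n = N + EE q c x n / D := by
  set F : ℕ → ℝ := fun n => x n + SS q (fun i => (x ((n:ℤ) + 1 + i) : ℝ)) with hF
  set P : ℕ → ℝ := fun n => SS q (fun i => c ^ (i + 1) * (x ((n:ℤ) - 1 - i) : ℝ)) with hP
  have hE : ∀ n : ℕ, EE q c x n = F n + P n := fun n => by simp only [EE, hF, hP]
  have hFr : ∀ n, F (n+1) = α * (F n - x n) := by
    intro n
    have : SS q (fun i => (x ((n:ℤ) + 1 + i) : ℝ)) = q * F (n+1) := by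
      rw [SS_rec h0 h1 (fun i => hx _)]
      simp only [hF]
      congr 2
      · congr 2; push_cast; ring
    have h2 : F n = x n + q * F (n+1) := by rw [← this]
    rw [h2]
    linear_combination (-F (n+1)) * hq
  have hPr : ∀ n : ℕ, P (n+1) = c * q * (x n + P n) := by
    intro n
    have hh : ∀ i : ℕ, |c ^ (i + 1) * (x (((n+1:ℕ):ℤ) - 1 - i) : ℝ)| ≤ C := fun i => by
      rw [cpow_abs hc]; exact hx _
    simp only [hP]
    rw [SS_rec h0 h1 hh]
    have : SS q (fun i => c ^ (i + 1 + 1) * (x (((n+1:ℕ):ℤ) - 1 - ((i + 1 : ℕ) : ℤ)) : ℝ))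
        = c * SS q (fun i => c ^ (i + 1) * (x ((n:ℤ) - 1 - i) : ℝ)) := by
      rw [← SS_mul]
      congr 1; ext i
      have : ((n+1:ℕ):ℤ) - 1 - ((i + 1 : ℕ) : ℤ) = (n:ℤ) - 1 - i := by push_cast; ring
      rw [this]; ring
    rw [this]
    have : ((n+1:ℕ):ℤ) - 1 - ((0 : ℕ) : ℤ) = (n:ℤ) := by push_cast; ring
    rw [this]; ring
  have hP0 : P 0 = 0 := by
    simp only [hP]
    have : ∀ i : ℕ, x (((0:ℕ):ℤ) - 1 - i) = 0 := fun i => hneg _ (by push_cast; omega)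
    simp only [this, SS]; simp
  refine ⟨F 0 / D, ?_⟩
  set N : ℕ → ℝ := fun n => F 0 / D * α ^ n - (F n + P n) / D with hN
  have hN0 : N 0 = 0 := by simp [hN, hP0]
  have hNr : ∀ n, N (n+1) = α * N n + x n + P n := by
    intro n
    simp only [hN]
    rw [hFr, hPr]
    field_simp
    rw [hD]; ring
  have hNN : ∀ n, N (n+2) = b * N (n+1) - c * N n + x (n+1:ℕ) := by
    intro n
    have e1 := hNr (n+1)
    have e2 := hPr n
    have e3 := hNr n
    rw [e1, e2, ← hb]
    linear_combination (c * q) * (-e3) + (-(c * N n)) * hq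
  have key : ∀ n, (∃ z : ℤ, N n = z) ∧ (∃ z : ℤ, N (n+1) = z) := by
    intro n
    induction n with
    | zero =>
      refine ⟨⟨0, by simp [hN0]⟩, ⟨x 0, ?_⟩⟩
      rw [hNr, hN0, hP0]; simp
    | succ n ih =>
      obtain ⟨⟨z1, e1⟩, ⟨z2, e2⟩⟩ := ih
      refine ⟨⟨z2, e2⟩, ⟨bz * z2 - cz * z1 + x (n+1:ℕ), ?_⟩⟩
      rw [hNN, e1, e2, hbz, hcz]; push_cast; ring
  intro n
  obtain ⟨z, hz⟩ := (key n).1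
  refine ⟨z, ?_⟩
  rw [← hz, hE]; simp only [hN]; ring

/-- truncation of a pattern -/
def trc (J : ℕ) (x : ℤ → ℤ) (n : ℤ) : ℤ := if |n| ≤ (J : ℤ) then x n else 0

lemma trc_abs {C : ℝ} (J : ℕ) {x : ℤ → ℤ} (hx : ∀ n, |(x n : ℝ)| ≤ C) (n : ℤ) :
    |(trc J x n : ℝ)| ≤ C := by
  unfold trc
  split_ifs
  · exact hx n
  · simpa using (abs_nonneg _).trans (hx 0)

lemma EE_close {q c C : ℝ} (h0 : 0 < q) (h1 : q < 1) (hc : |c| = 1) {x y : ℤ → ℤ} {n o : ℤ}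
    (hx : ∀ n, |(x n : ℝ)| ≤ C) (hy : ∀ n, |(y n : ℝ)| ≤ C) (R : ℕ)
    (h : ∀ i : ℤ, |i| ≤ R → x (n + i) = y (o + i)) :
    |EE q c x n - EE q c y o| ≤ 4 * C * (q / (1 - q)) * q ^ R := by
  have e0 : x n = y o := by simpa using h 0 (by simp)
  have b1 : |SS q (fun i => (x (n + 1 + i) : ℝ)) - SS q (fun i => (y (o + 1 + i) : ℝ))|
      ≤ 2 * C * (q / (1 - q)) * q ^ R := by
    rw [SS_sub h0 h1 (fun i => hx _) (fun i => hy _)]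
    apply SS_tail h0 h1
    · intro i
      have := abs_sub (x (n + 1 + i) : ℝ) (y (o + 1 + i) : ℝ)
      linarith [hx (n+1+i), hy (o+1+i)]
    · intro i hi
      have := h (1 + i) (by rw [abs_of_nonneg (by positivity)]; omega)
      rw [← add_assoc, ← add_assoc] at this
      rw [this]; ring
  have b2 : |SS q (fun i => c ^ (i + 1) * (x (n - 1 - i) : ℝ)) -
      SS q (fun i => c ^ (i + 1) * (y (o - 1 - i) : ℝ))| ≤ 2 * C * (q / (1 - q)) * q ^ R := by
    rw [SS_sub h0 h1 (C := C) (C' := C) (fun i => by rw [cpow_abs hc]; exact hx _)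
      (fun i => by rw [cpow_abs hc]; exact hy _)]
    apply SS_tail h0 h1
    · intro i
      have := abs_sub (c ^ (i + 1) * (x (n - 1 - i) : ℝ)) (c ^ (i + 1) * (y (o - 1 - i) : ℝ))
      rw [cpow_abs hc, cpow_abs hc] at this
      linarith [hx (n-1-i), hy (o-1-i)]
    · intro i hi
      have := h (-1 - i) (by rw [abs_le]; constructor <;> omega)
      have e1 : n + (-1 - (i:ℤ)) = n - 1 - i := by ring
      have e2 : o + (-1 - (i:ℤ)) = o - 1 - i := by ring
      rw [e1, e2] at this
      rw [this]; ring
  unfold EE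
  rw [e0]
  rw [abs_le] at *
  constructor <;> linarith [b1.1, b1.2, b2.1, b2.2]

/-- The sequence of longer and longer truncations -/
def glue (x : ℤ → ℤ) (k : ℤ) : ℤ :=
  if k < 0 then 0 else
    trc (Nat.sqrt k.toNat / 2) x (k - (Nat.sqrt k.toNat : ℤ) * Nat.sqrt k.toNat - Nat.sqrt k.toNat)

lemma glue_block (x : ℤ → ℤ) (j : ℕ) (k : ℤ) (h1 : (j:ℤ) * j ≤ k) (h2 : k ≤ j * j + 2 * j) :
    glue x k = trc (j / 2) x (k - j * j - j) := by
  have hk : 0 ≤ k := le_trans (by positivity) h1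
  have hs : Nat.sqrt k.toNat = j := by
    lift k to ℕ using hk
    rw [Int.toNat_natCast]
    symm
    rw [Nat.eq_sqrt]
    constructor
    · exact_mod_cast h1
    · have : k ≤ j * j + 2 * j := by exact_mod_cast h2
      nlinarith
  unfold glue
  rw [hs, if_neg (not_lt.mpr hk)]

lemma trc_zero (J : ℕ) (x : ℤ → ℤ) (n : ℤ) (h : (J:ℤ) < |n|) : trc J x n = 0 := by
  unfold trc; rw [if_neg (not_le.mpr h)]

lemma glue_local (x : ℤ → ℤ) (n : ℕ) (i : ℤ) (hi : |i| ≤ (Nat.sqrt n / 2 : ℕ)) :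
    glue x (n + i) = trc (Nat.sqrt n / 2) x
      ((n:ℤ) - (Nat.sqrt n : ℤ) * Nat.sqrt n - Nat.sqrt n + i) := by
  have a1 : ((Nat.sqrt n : ℤ)) * Nat.sqrt n ≤ n := by exact_mod_cast Nat.sqrt_le n
  have a2 : (n : ℤ) ≤ (Nat.sqrt n : ℤ) * Nat.sqrt n + 2 * Nat.sqrt n := by
    have := Nat.sqrt_le_add n
    have : n ≤ Nat.sqrt n * Nat.sqrt n + 2 * Nat.sqrt n := by omega
    exact_mod_cast this
  generalize Nat.sqrt n = j at *
  rw [abs_le] at hi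
  obtain ⟨hi1, hi2⟩ := hi
  push_cast at hi1 hi2
  rcases lt_or_ge ((n:ℤ) + i) (j * j) with hlt | hge
  · rw [trc_zero (j/2) x ((n:ℤ) - (j : ℤ) * j - j + i)]
    · by_cases hn : (n:ℤ) + i < 0
      · unfold glue; rw [if_pos hn]
      · rcases Nat.eq_zero_or_pos j with rfl | hj
        · simp at *; omega
        · obtain ⟨j, rfl⟩ : ∃ l, j = l + 1 := ⟨j - 1, by omega⟩
          rw [glue_block x j]
          · apply trc_zero
            rw [lt_abs]; left
            push_cast at *
            nlinarith [show (j:ℤ)/2 ≤ ((j:ℤ)+1)/2 by omega, show (j:ℤ)/2 + ((j:ℤ)+1)/2 = j by omega]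
          · push_cast at *
            nlinarith [show 2 * (((j:ℤ)+1)/2) ≤ j + 1 by omega]
          · push_cast at *; nlinarith
    · rw [lt_abs]; right; push_cast; nlinarith [show (j:ℤ)/2 ≤ j by omega]
  · rcases le_or_gt ((n:ℤ) + i) (j * j + 2 * j) with hle | hgt
    · rw [glue_block x j _ hge hle]; congr 1; ring
    · rw [trc_zero (j/2) x ((n:ℤ) - (j : ℤ) * j - j + i)]
      · rw [glue_block x (j+1)]
        · apply trc_zero
          rw [lt_abs]; right
          push_cast
          nlinarith [show (j:ℤ)/2 + ((j:ℤ)+1)/2 = j by omega]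
        · push_cast; nlinarith
        · push_cast; nlinarith [show (j:ℤ)/2 ≤ j by omega]
      · rw [lt_abs]; left; push_cast; nlinarith [show (j:ℤ)/2 ≤ j by omega]

lemma glue_abs {C : ℝ} {x : ℤ → ℤ} (hx : ∀ n, |(x n : ℝ)| ≤ C) (n : ℤ) :
    |(glue x n : ℝ)| ≤ C := by
  unfold glue
  split_ifs
  · simpa using (abs_nonneg _).trans (hx 0)
  · exact trc_abs _ hx _

lemma dist_le (N : ℤ) (y : ℝ) : distNearestInt (N + y) ≤ |y| := by
  unfold distNearestInt
  have := round_le ((N:ℝ) + y) N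
  simpa using this

lemma dist_ge (N : ℤ) (y t e : ℝ) (ht0 : 0 ≤ t) (ht : t ≤ 1/2) (h : |y - t| ≤ e) :
    t - e ≤ distNearestInt (N + y) := by
  unfold distNearestInt
  set z := round ((N:ℝ) + y)
  have h1 : t ≤ |t - ((z - N : ℤ) : ℝ)| := by
    rcases le_or_gt (z - N) 0 with h | h
    · have : ((z - N : ℤ) : ℝ) ≤ 0 := by exact_mod_cast h
      rw [le_abs]; left; linarith
    · have : (1:ℝ) ≤ ((z - N : ℤ) : ℝ) := by exact_mod_cast h
      rw [le_abs]; right; linarith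
  have h2 := abs_add_le (t - y) (N + y - z)
  have h3 : t - y + (N + y - z) = t - ((z - N : ℤ) : ℝ) := by push_cast; ring
  rw [h3] at h2
  rw [abs_sub_comm] at h
  linarith

lemma spec_mem {α q c D b C κ t : ℝ} (h0 : 0 < q) (h1 : q < 1) (hq : α * q = 1) (hc : |c| = 1)
    (hb : α + c * q = b) (hD : D = α - c * q) (hD0 : 0 < D) (bz cz : ℤ) (hbz : b = bz)
    (hcz : c = cz) (x : ℤ → ℤ) (hx : ∀ n, |(x n : ℝ)| ≤ C)
    (ht0 : 0 ≤ t) (ht : t ≤ 1/2) (hκ : κ ≤ t) (hE : EE q c x 0 = D * t) (J0 : ℕ)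
    (hJ : ∀ J ≥ J0, ∀ n ≠ 0, |EE q c (trc J x) n| ≤ D * κ) : t ∈ specL α := by
  obtain ⟨ξ, hξ⟩ := rep h0 h1 hq hc hb hD hD0.ne' bz cz hbz hcz (glue x) (C := C) (glue_abs hx)
    (fun n hn => by unfold glue; rw [if_pos hn])
  refine ⟨ξ, ?_⟩
  set K : ℝ := 4 * C * (q / (1 - q)) with hK
  set e : ℕ → ℝ := fun n => 2 * (K * q ^ (Nat.sqrt n / 2)) / D with he
  have hsq : Filter.Tendsto (fun n : ℕ => Nat.sqrt n / 2) Filter.atTop Filter.atTop := by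
    refine Filter.tendsto_atTop_atTop.mpr (fun m => ⟨(2*m)*(2*m), fun n hn => ?_⟩)
    have := Nat.le_sqrt.mpr hn
    omega
  have hee : Filter.Tendsto e Filter.atTop (nhds 0) := by
    have := ((tendsto_pow_atTop_nhds_zero_of_lt_one h0.le h1).comp hsq).const_mul (2 * K / D)
    rw [mul_zero] at this
    refine this.congr (fun n => ?_)
    simp only [he, Function.comp]; ring
  have hC : 0 ≤ C := (abs_nonneg _).trans (hx 0)
  have hK0 : 0 ≤ K := by
    have : 0 < 1 - q := by linarith
    positivity
  have hcl : ∀ n : ℕ, |EE q c (glue x) n - EE q c (trc (Nat.sqrt n / 2) x)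
      ((n:ℤ) - (Nat.sqrt n : ℤ) * Nat.sqrt n - Nat.sqrt n)| ≤ K * q ^ (Nat.sqrt n / 2) := fun n =>
    EE_close h0 h1 hc (glue_abs hx) (trc_abs _ hx) _ (fun i hi => glue_local x n i hi)
  have hcl0 : ∀ J : ℕ, |EE q c (trc J x) 0 - D * t| ≤ K * q ^ J := fun J => by
    rw [← hE]
    refine EE_close h0 h1 hc (trc_abs _ hx) hx _ (fun i hi => ?_)
    unfold trc
    rw [if_pos (by simpa using hi)]
  have hcen : ∀ n : ℕ, (n:ℤ) - (Nat.sqrt n : ℤ) * Nat.sqrt n - Nat.sqrt n = 0 →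
      |EE q c (glue x) n / D - t| ≤ e n := fun n hn => by
    have a1 := hcl n
    rw [hn] at a1
    have a2 := hcl0 (Nat.sqrt n / 2)
    have a3 := abs_sub_le (EE q c (glue x) n) (EE q c (trc (Nat.sqrt n / 2) x) 0) (D * t)
    have : EE q c (glue x) n / D - t = (EE q c (glue x) n - D * t) / D := by field_simp
    rw [this, abs_div, abs_of_pos hD0]
    simp only [he]
    gcongr
    linarith
  have hup : ∀ᶠ n : ℕ in Filter.atTop, distNearestInt (ξ * α ^ n) ≤ t + e n := by
    filter_upwards [hsq.eventually_ge_atTop J0] with n hn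
    obtain ⟨N, hN⟩ := hξ n
    rw [hN]
    refine (dist_le _ _).trans ?_
    by_cases hz : (n:ℤ) - (Nat.sqrt n : ℤ) * Nat.sqrt n - Nat.sqrt n = 0
    · have := abs_le.mp (hcen n hz)
      rw [abs_le]; constructor <;> linarith [this.1, this.2]
    · have a1 := hcl n
      have a2 := hJ _ hn _ hz
      have a3 := abs_sub_abs_le_abs_sub (EE q c (glue x) n) (EE q c (trc (Nat.sqrt n / 2) x)
        ((n:ℤ) - (Nat.sqrt n : ℤ) * Nat.sqrt n - Nat.sqrt n))
      rw [abs_div, abs_of_pos hD0, div_le_iff₀ hD0]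
      simp only [he]
      have : 0 ≤ K * q ^ (Nat.sqrt n / 2) := by positivity
      have h5 : (t + 2 * (K * q ^ (Nat.sqrt n / 2)) / D) * D = D * t + 2 * (K * q ^ (Nat.sqrt n / 2)) := by
        field_simp
      rw [h5]
      have : D * κ ≤ D * t := by gcongr
      linarith
  have hlow : ∀ N0 : ℕ, ∃ n ≥ N0, t - e n ≤ distNearestInt (ξ * α ^ n) := by
    intro N0
    refine ⟨N0 * N0 + N0, by nlinarith, ?_⟩
    obtain ⟨N, hN⟩ := hξ (N0 * N0 + N0)
    rw [hN]
    refine dist_ge _ _ _ _ ht0 ht (hcen _ ?_)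
    rw [Nat.sqrt_add_eq _ (by omega)]
    push_cast; ring
  have hbd : ∀ n, distNearestInt (ξ * α ^ n) ≤ 1/2 := fun n => abs_sub_round _
  have hbd0 : ∀ n, 0 ≤ distNearestInt (ξ * α ^ n) := fun n => abs_nonneg _
  unfold limsupDist
  apply le_antisymm
  · refine le_of_forall_pos_le_add (fun δ hδ => ?_)
    refine Filter.limsup_le_of_le ?_ ?_
    · exact Filter.isCoboundedUnder_le_of_le (x := 0) _ (fun n => hbd0 n)
    · filter_upwards [hup, hee.eventually_lt_const hδ] with n a1 a2
      linarith
  · refine le_of_forall_pos_le_add (fun δ hδ => ?_)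
    have : t - δ ≤ Filter.limsup (fun n : ℕ => distNearestInt (ξ * α ^ n)) Filter.atTop := by
      refine Filter.le_limsup_of_frequently_le ?_ ?_
      · rw [Filter.frequently_atTop]
        intro N0
        obtain ⟨N1, hN1⟩ := Filter.eventually_atTop.mp (hee.eventually_lt_const hδ)
        obtain ⟨n, hn, h⟩ := hlow (max N0 N1)
        refine ⟨n, (le_max_left _ _).trans hn, ?_⟩
        have := hN1 n ((le_max_right _ _).trans hn)
        linarith
      · exact Filter.isBoundedUnder_of ⟨1/2, fun n => hbd n⟩
    linarith

structure HP (α q : ℝ) (c b : ℤ) : Prop where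
  h0 : 0 < q
  h1 : q < 1
  hq : α * q = 1
  hc : c = 1 ∨ c = -1
  hb : α + c * q = b
  hα : 3 < α

lemma HP.cabs {α q : ℝ} {c b : ℤ} (h : HP α q c b) : |(c:ℝ)| = 1 := by
  rcases h.hc with h | h <;> simp [h]

lemma HP.csq {α q : ℝ} {c b : ℤ} (h : HP α q c b) : (c:ℝ) * c = 1 := by
  rcases h.hc with h | h <;> simp [h]

/-- two-sided pattern -/
def pat (a0 c : ℤ) (f g : ℕ → ℤ) (n : ℤ) : ℤ :=
  if n = 0 then a0 else if 0 < n then f (n.toNat - 1) else c ^ (-n).toNat * g ((-n).toNat - 1)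

lemma pat_zero (a0 c : ℤ) (f g : ℕ → ℤ) : pat a0 c f g 0 = a0 := by simp [pat]

lemma pat_pos (a0 c : ℤ) (f g : ℕ → ℤ) (n : ℤ) (k : ℕ) (h : n = k + 1) : pat a0 c f g n = f k := by
  subst h
  unfold pat
  rw [if_neg (by omega), if_pos (by omega)]
  congr 1

lemma pat_neg (a0 c : ℤ) (f g : ℕ → ℤ) (n : ℤ) (k : ℕ) (h : n = -(k + 1)) :
    pat a0 c f g n = c ^ (k + 1) * g k := by
  subst h
  unfold pat
  rw [if_neg (by omega), if_neg (by omega)]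
  have : (-(-((k:ℤ) + 1))).toNat = k + 1 := by omega
  rw [this]; rfl

def cut (J : ℕ) (f : ℕ → ℤ) (k : ℕ) : ℤ := if k < J then f k else 0

lemma int_cases (n : ℤ) : n = 0 ∨ (∃ k : ℕ, n = k + 1) ∨ (∃ k : ℕ, n = -(k + 1)) := by
  rcases lt_trichotomy n 0 with h | h | h
  · right; right; exact ⟨(-n).toNat - 1, by omega⟩
  · left; exact h
  · right; left; exact ⟨n.toNat - 1, by omega⟩

lemma trc_pat (a0 c : ℤ) (f g : ℕ → ℤ) (J : ℕ) :
    trc J (pat a0 c f g) = pat a0 c (cut J f) (cut J g) := by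
  ext n
  rcases int_cases n with h | ⟨k, h⟩ | ⟨k, h⟩
  · subst h; simp [trc, pat_zero]
  · rw [pat_pos _ _ _ _ _ k h]
    unfold trc cut
    rw [pat_pos _ _ _ _ _ k h, abs_of_nonneg (by omega)]
    split_ifs <;> first | rfl | omega
  · rw [pat_neg _ _ _ _ _ k h]
    unfold trc cut
    rw [pat_neg _ _ _ _ _ k h, abs_of_nonpos (by omega)]
    split_ifs <;> first | rfl | omega | simp

lemma pat_abs {α q : ℝ} {c b : ℤ} (hp : HP α q c b) {m A : ℝ} (hA : m ≤ A) {a0 : ℤ} {f g : ℕ → ℤ}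
    (ha : |(a0:ℝ)| ≤ A) (hf : ∀ k, |(f k : ℝ)| ≤ m) (hg : ∀ k, |(g k : ℝ)| ≤ m) (n : ℤ) :
    |(pat a0 c f g n : ℝ)| ≤ A ∧ (n ≠ 0 → |(pat a0 c f g n : ℝ)| ≤ m) := by
  rcases int_cases n with h | ⟨k, h⟩ | ⟨k, h⟩
  · subst h; rw [pat_zero]; exact ⟨ha, fun h => absurd rfl h⟩
  · rw [pat_pos _ _ _ _ _ k h]; exact ⟨(hf k).trans hA, fun _ => hf k⟩
  · rw [pat_neg _ _ _ _ _ k h]; push_cast; rw [cpow_abs hp.cabs]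
    exact ⟨(hg k).trans hA, fun _ => hg k⟩

lemma pat_out_pos (a0 c : ℤ) (f g : ℕ → ℤ) (q : ℝ) (k : ℕ) :
    SS q (fun i => (pat a0 c f g ((k:ℤ) + 1 + 1 + i) : ℝ)) = SS q (fun i => (f (k + 1 + i) : ℝ)) := by
  congr 1; ext i
  rw [pat_pos _ _ _ _ _ (k + 1 + i) (by push_cast; ring)]

lemma pat_out_neg {α q : ℝ} {c b : ℤ} (hp : HP α q c b) (a0 : ℤ) (f g : ℕ → ℤ) (k : ℕ) :
    SS q (fun i => (c:ℝ) ^ (i + 1) * (pat a0 c f g (-((k:ℤ) + 1) - 1 - i) : ℝ))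
      = (c:ℝ) ^ (k+1) * SS q (fun i => (g (k + 1 + i) : ℝ)) := by
  rw [← SS_mul]
  congr 1; ext i
  rw [pat_neg _ _ _ _ _ (k + 1 + i) (by push_cast; ring)]
  push_cast
  have : (c:ℝ) ^ (i+1) * ((c:ℝ) ^ (k + 1 + i + 1) * (g (k+1+i) : ℝ))
    = ((c:ℝ) * c) ^ (i + 1) * ((c:ℝ) ^ (k+1) * (g (k+1+i) : ℝ)) := by ring
  rw [this, hp.csq, one_pow, one_mul]

lemma EE_pos {α q : ℝ} {c b : ℤ} (hp : HP α q c b) {m A O : ℝ} (hA : m ≤ A) {a0 : ℤ} {f g : ℕ → ℤ}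
    (ha : |(a0:ℝ)| ≤ A) (hf : ∀ k, |(f k : ℝ)| ≤ m) (hg : ∀ k, |(g k : ℝ)| ≤ m) (k : ℕ)
    (hO : |(f k : ℝ) + SS q (fun i => (f (k + 1 + i) : ℝ))| ≤ O) :
    |EE q c (pat a0 c f g) ((k:ℤ) + 1)| ≤ O + (m * (q / (1 - q)) + (A - m) * q ^ (k + 1)) := by
  unfold EE
  rw [pat_out_pos, pat_pos _ _ _ _ _ k rfl]
  refine (abs_add_le _ _).trans (add_le_add hO ?_)
  apply SS_exc hp.h0 hp.h1 hA k
  · intro i hi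
    rw [cpow_abs hp.cabs]
    exact (pat_abs hp hA ha hf hg _).2 (by omega)
  · rw [cpow_abs hp.cabs]
    exact (pat_abs hp hA ha hf hg _).1

lemma EE_neg {α q : ℝ} {c b : ℤ} (hp : HP α q c b) {m A O : ℝ} (hA : m ≤ A) {a0 : ℤ} {f g : ℕ → ℤ}
    (ha : |(a0:ℝ)| ≤ A) (hf : ∀ k, |(f k : ℝ)| ≤ m) (hg : ∀ k, |(g k : ℝ)| ≤ m) (k : ℕ)
    (hO : |(g k : ℝ) + SS q (fun i => (g (k + 1 + i) : ℝ))| ≤ O) :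
    |EE q c (pat a0 c f g) (-((k:ℤ) + 1))| ≤ O + (m * (q / (1 - q)) + (A - m) * q ^ (k + 1)) := by
  unfold EE
  rw [pat_out_neg hp, pat_neg _ _ _ _ _ k rfl, add_right_comm]
  refine (abs_add_le _ _).trans (add_le_add ?_ ?_)
  · push_cast
    rw [← mul_add, cpow_abs hp.cabs]; exact hO
  apply SS_exc hp.h0 hp.h1 hA k
  · intro i hi
    exact (pat_abs hp hA ha hf hg _).2 (by omega)
  · exact (pat_abs hp hA ha hf hg _).1

/-- remainders -/
noncomputable def xs (α x0 : ℝ) : ℕ → ℝ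
  | 0 => x0
  | k + 1 => α * xs α x0 k - round (α * xs α x0 k)

noncomputable def cs (α x0 : ℝ) (k : ℕ) : ℤ := round (α * xs α x0 k)

lemma xs_succ (α x0 : ℝ) (k : ℕ) : xs α x0 (k + 1) = α * xs α x0 k - cs α x0 k := rfl

lemma xs_abs {α x0 : ℝ} (h : |x0| ≤ 1/2) (k : ℕ) : |xs α x0 k| ≤ 1/2 := by
  cases k with
  | zero => exact h
  | succ k => exact abs_sub_round _

noncomputable def hs (α x0 : ℝ) (σ : ℕ) (k : ℕ) : ℤ := (cs α x0 k + ((k + σ) % 2 : ℕ)) / 2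

lemma hs_add (α x0 : ℝ) (k : ℕ) : hs α x0 0 k + hs α x0 1 k = cs α x0 k := by
  unfold hs; omega

lemma cs_abs {α x0 : ℝ} (hα : 0 < α) (h : |x0| ≤ 1/2) (k : ℕ) : |(cs α x0 k : ℝ)| ≤ (α + 1) / 2 := by
  have h1 := abs_le.mp (xs_abs (α := α) h k)
  have h2 := abs_le.mp (xs_abs (α := α) h (k+1))
  rw [xs_succ] at h2
  rw [abs_le]
  constructor <;> nlinarith [h1.1, h1.2, h2.1, h2.2]

lemma hs_abs {α x0 : ℝ} (hα : 0 < α) (h : |x0| ≤ 1/2) (σ k : ℕ) :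
    |(hs α x0 σ k : ℝ)| ≤ (α + 3) / 4 := by
  have h1 := abs_le.mp (cs_abs hα h k)
  have h2 : 2 * hs α x0 σ k ≤ cs α x0 k + 1 := by unfold hs; omega
  have h3 : cs α x0 k - 1 ≤ 2 * hs α x0 σ k := by unfold hs; omega
  have h2' : 2 * (hs α x0 σ k : ℝ) ≤ cs α x0 k + 1 := by exact_mod_cast h2
  have h3' : (cs α x0 k : ℝ) - 1 ≤ 2 * hs α x0 σ k := by exact_mod_cast h3
  rw [abs_le]
  constructor <;> linarith [h1.1, h1.2]

lemma cut_abs {C : ℝ} {f : ℕ → ℤ} (hf : ∀ k, |(f k : ℝ)| ≤ C) (J k : ℕ) : |(cut J f k : ℝ)| ≤ C := by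
  unfold cut
  split_ifs
  · exact hf k
  · simpa using (abs_nonneg _).trans (hf 0)

lemma SS_cs {α q : ℝ} {c b : ℤ} (hp : HP α q c b) {x0 : ℝ} (h : |x0| ≤ 1/2) :
    SS q (fun i => (cs α x0 i : ℝ)) = x0 := by
  have hα : 0 < α := by linarith [hp.hα]
  have hpart : ∀ N : ℕ, ∑ i ∈ Finset.range N, (cs α x0 i : ℝ) * q ^ (i + 1)
      = x0 - q ^ N * xs α x0 N := by
    intro N
    induction N with
    | zero => simp [xs]
    | succ N ih =>
      rw [Finset.sum_range_succ, ih, xs_succ, pow_succ]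
      linear_combination (q ^ N * xs α x0 N) * hp.hq
  have hs := (SS_summable hp.h0 hp.h1 (fun i => cs_abs hα h i)).hasSum.tendsto_sum_nat
  have ht : Filter.Tendsto (fun N : ℕ => x0 - q ^ N * xs α x0 N) Filter.atTop (nhds (x0 - 0)) := by
    refine Filter.Tendsto.sub tendsto_const_nhds ?_
    refine squeeze_zero_norm (a := fun N => q ^ N) (fun N => ?_)
      (tendsto_pow_atTop_nhds_zero_of_lt_one hp.h0.le hp.h1)
    rw [Real.norm_eq_abs, abs_mul, abs_of_pos (pow_pos hp.h0 N)]
    have := xs_abs (α := α) h N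
    nlinarith [pow_pos hp.h0 N]
  rw [sub_zero] at ht
  refine tendsto_nhds_unique hs ?_
  simpa only [hpart] using ht

lemma EE_zero {α q : ℝ} {c b : ℤ} (hp : HP α q c b) {x0 : ℝ} (h : |x0| ≤ 1/2) (a0 : ℤ) :
    EE q c (pat a0 c (hs α x0 0) (hs α x0 1)) 0 = a0 + x0 := by
  have hα : 0 < α := by linarith [hp.hα]
  unfold EE
  rw [pat_zero, add_assoc]
  congr 1
  have e1 : SS q (fun i => (pat a0 c (hs α x0 0) (hs α x0 1) (0 + 1 + i) : ℝ))
      = SS q (fun i => (hs α x0 0 i : ℝ)) := by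
    congr 1; ext i; rw [pat_pos _ _ _ _ _ i (by ring)]
  have e2 : SS q (fun i => (c:ℝ) ^ (i + 1) * (pat a0 c (hs α x0 0) (hs α x0 1) (0 - 1 - i) : ℝ))
      = SS q (fun i => (hs α x0 1 i : ℝ)) := by
    congr 1; ext i; rw [pat_neg _ _ _ _ _ i (by ring)]
    push_cast
    rw [← mul_assoc, ← mul_pow, hp.csq, one_pow, one_mul]
  rw [e1, e2, SS_add hp.h0 hp.h1 (fun i => hs_abs hα h 0 i) (fun i => hs_abs hα h 1 i)]
  conv_rhs => rw [← SS_cs hp h]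
  congr 1; ext i
  exact_mod_cast hs_add α x0 i

/-- Assembly. -/
lemma assemble {α q : ℝ} {c b : ℤ} (hp : HP α q c b) (B T0 : ℝ) (hB : 2 * B < 2 * α - b)
    (hT : T0 < 1/2) (J0 : ℕ)
    (H : ∀ t, T0 ≤ t → 0 ≤ t → t ≤ 1/2 → ∀ a0 : ℤ, ∀ x0 : ℝ, |x0| ≤ 1/2 →
      (2 * α - b) * t = a0 + x0 → ∀ J ≥ J0, ∀ k : ℕ,
      |EE q c (pat a0 c (cut J (hs α x0 0)) (cut J (hs α x0 1))) ((k:ℤ) + 1)| ≤ B ∧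
      |EE q c (pat a0 c (cut J (hs α x0 0)) (cut J (hs α x0 1))) (-((k:ℤ) + 1))| ≤ B) :
    ∃ κ : ℝ, κ < 1 / 2 ∧ Set.Icc κ (1 / 2) ⊆ specL α := by
  have hα := hp.hα
  have hD : 2 * α - b = α - c * q := by rw [← hp.hb]; ring
  have hcq : |(c:ℝ) * q| < 1 := by rw [abs_mul, hp.cabs, one_mul, abs_of_pos hp.h0]; exact hp.h1
  have hD0 : 0 < 2 * α - b := by rw [hD]; linarith [(abs_lt.mp hcq).2]
  refine ⟨max (B / (2 * α - b)) (max T0 0), ?_, ?_⟩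
  · rw [max_lt_iff, max_lt_iff]
    refine ⟨?_, hT, by norm_num⟩
    rw [div_lt_iff₀ hD0]; linarith
  · rintro t ⟨ht1, ht2⟩
    have a1 := (le_max_left _ _).trans ht1
    have a2 := ((le_max_left _ _).trans (le_max_right _ _)).trans ht1
    have a3 := ((le_max_right _ _).trans (le_max_right _ _)).trans ht1
    set x0 := (2 * α - b) * t - round ((2 * α - b) * t) with hx0
    have hxa : |x0| ≤ 1/2 := abs_sub_round _
    have hdec : (2 * α - b) * t = (round ((2 * α - b) * t) : ℤ) + x0 := by rw [hx0]; ring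
    have hα0 : 0 < α := by linarith
    set a0 := round ((2 * α - b) * t)
    refine spec_mem (C := max |(a0:ℝ)| ((α+3)/4)) (κ := B / (2 * α - b))
      hp.h0 hp.h1 hp.hq hp.cabs hp.hb hD hD0 b c rfl rfl
      (pat a0 c (hs α x0 0) (hs α x0 1)) ?_ a3 ht2 a1 ?_ J0 ?_
    · intro n
      exact (pat_abs hp (le_max_right _ _) (le_max_left _ _) (fun k => hs_abs hα0 hxa 0 k)
        (fun k => hs_abs hα0 hxa 1 k) n).1
    · rw [EE_zero hp hxa, hdec]
    · intro J hJ n hn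
      rw [trc_pat]
      have : (2 * α - b) * (B / (2 * α - b)) = B := by field_simp
      rw [this]
      rcases int_cases n with h | ⟨k, h⟩ | ⟨k, h⟩
      · exact absurd h hn
      · rw [h]; exact (H t a2 a3 ht2 a0 x0 hxa hdec J hJ k).1
      · rw [h]; exact (H t a2 a3 ht2 a0 x0 hxa hdec J hJ k).2

/-- Cases where a uniform bound suffices. -/
lemma assemble_unif' {α q : ℝ} {c b : ℤ} (hp : HP α q c b) (m O A : ℝ)
    (hA : ∀ a0 : ℤ, |(a0:ℝ)| ≤ (2 * α - b) / 2 + 1/2 → |(a0:ℝ)| ≤ A) (hm : m ≤ A)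
    (hB : 2 * (O + (m * (q / (1 - q)) + (A - m) * q)) < 2 * α - b)
    (hh : ∀ x0 : ℝ, |x0| ≤ 1/2 → ∀ σ k, |(hs α x0 σ k : ℝ)| ≤ m)
    (hO : ∀ x0 : ℝ, |x0| ≤ 1/2 → ∀ J σ k, |(cut J (hs α x0 σ) k : ℝ) +
      SS q (fun i => (cut J (hs α x0 σ) (k + 1 + i) : ℝ))| ≤ O) :
    ∃ κ : ℝ, κ < 1 / 2 ∧ Set.Icc κ (1 / 2) ⊆ specL α := by
  refine assemble hp _ 0 hB (by norm_num) 0 ?_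
  intro t _ h0 ht a0 x0 hx hdec J _ k
  have hα := hp.hα
  have hD : 2 * α - b = α - c * q := by rw [← hp.hb]; ring
  have hcq : |(c:ℝ) * q| < 1 := by rw [abs_mul, hp.cabs, one_mul, abs_of_pos hp.h0]; exact hp.h1
  have hD0 : 0 < 2 * α - b := by rw [hD]; linarith [(abs_lt.mp hcq).2]
  have ha : |(a0:ℝ)| ≤ A := by
    apply hA
    have h1 := abs_le.mp hx
    have h2 : 0 ≤ (2 * α - b) * t := by positivity
    have h3 : (2 * α - b) * t ≤ (2 * α - b) * (1/2) := by gcongr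
    rw [abs_le]; constructor <;> linarith [h1.1, h1.2]
  have hq1 : (A - m) * q ^ (k + 1) ≤ (A - m) * q := by
    apply mul_le_mul_of_nonneg_left _ (by linarith)
    rw [pow_succ]
    have := pow_le_one₀ (n := k) hp.h0.le hp.h1.le
    nlinarith [hp.h0]
  constructor
  · refine (EE_pos hp hm ha (cut_abs (hh x0 hx 0) J) (cut_abs (hh x0 hx 1) J) k (hO x0 hx J 0 k)).trans ?_
    linarith
  · refine (EE_neg hp hm ha (cut_abs (hh x0 hx 0) J) (cut_abs (hh x0 hx 1) J) k (hO x0 hx J 1 k)).trans ?_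
    linarith

lemma assemble_unif {α q : ℝ} {c b : ℤ} (hp : HP α q c b) (m O : ℝ)
    (hm : m ≤ (2 * α - b) / 2 + 1/2)
    (hB : 2 * (O + (m * (q / (1 - q)) + ((2 * α - b) / 2 + 1/2 - m) * q)) < 2 * α - b)
    (hh : ∀ x0 : ℝ, |x0| ≤ 1/2 → ∀ σ k, |(hs α x0 σ k : ℝ)| ≤ m)
    (hO : ∀ x0 : ℝ, |x0| ≤ 1/2 → ∀ J σ k, |(cut J (hs α x0 σ) k : ℝ) +
      SS q (fun i => (cut J (hs α x0 σ) (k + 1 + i) : ℝ))| ≤ O) :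
    ∃ κ : ℝ, κ < 1 / 2 ∧ Set.Icc κ (1 / 2) ⊆ specL α :=
  assemble_unif' hp m O _ (fun _ h => h) hm hB hh hO

lemma assemble_simple {α q : ℝ} {c b : ℤ} (hp : HP α q c b) (m : ℝ)
    (hm : m ≤ (2 * α - b) / 2 + 1/2)
    (hB : 2 * (m + 2 * (m * (q / (1 - q))) + ((2 * α - b) / 2 + 1/2 - m) * q) < 2 * α - b)
    (hh : ∀ x0 : ℝ, |x0| ≤ 1/2 → ∀ σ k, |(hs α x0 σ k : ℝ)| ≤ m) :
    ∃ κ : ℝ, κ < 1 / 2 ∧ Set.Icc κ (1 / 2) ⊆ specL α := by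
  refine assemble_unif hp m (m + m * (q / (1 - q))) hm (by linarith) hh ?_
  intro x0 hx J σ k
  refine (abs_add_le _ _).trans (add_le_add (cut_abs (hh x0 hx σ) J k) ?_)
  exact SS_abs hp.h0 hp.h1 (fun i => cut_abs (hh x0 hx σ) J _)

lemma hs_int {α x0 : ℝ} (hα : 0 < α) (h : |x0| ≤ 1/2) (M : ℤ) (hM : (α + 1) / 2 < 2 * M + 1)
    (σ k : ℕ) : |cs α x0 k| ≤ 2 * M ∧ |hs α x0 σ k| ≤ M := by
  have h1 := (cs_abs hα h k).trans_lt hM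
  have h2 : |cs α x0 k| < 2 * M + 1 := by exact_mod_cast h1
  have h3 : |cs α x0 k| ≤ 2 * M := by omega
  refine ⟨h3, ?_⟩
  rw [abs_le] at *
  unfold hs
  constructor <;> omega

lemma hs_int' {α x0 : ℝ} (hα : 0 < α) (h : |x0| ≤ 1/2) (M : ℤ) (hM : (α + 1) / 2 < 2 * M + 1)
    (σ k : ℕ) : |(hs α x0 σ k : ℝ)| ≤ M := by
  exact_mod_cast (hs_int hα h M hM σ k).2

lemma cs_next {α x0 : ℝ} (hα : 0 < α) (h : |x0| ≤ 1/2) (M z : ℤ)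
    (hz : α * (α / 2 - M) + 1/2 < z + 1) (k : ℕ) :
    (M ≤ cs α x0 k → cs α x0 (k+1) ≤ z) ∧ (cs α x0 k ≤ -M → -z ≤ cs α x0 (k+1)) := by
  have h1 := abs_le.mp (xs_abs (α := α) h k)
  have h2 := abs_le.mp (xs_abs (α := α) h (k+2))
  have e1 := xs_succ α x0 k
  have e2 := xs_succ α x0 (k+1)
  constructor
  · intro hM
    have hM' : (M:ℝ) ≤ cs α x0 k := by exact_mod_cast hM
    have : xs α x0 (k+1) ≤ α / 2 - M := by rw [e1]; nlinarith [h1.2]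
    have h4 : (cs α x0 (k+1) : ℝ) < z + 1 := by
      have := mul_le_mul_of_nonneg_left this hα.le
      linarith [h2.1]
    have : cs α x0 (k+1) < z + 1 := by exact_mod_cast h4
    omega
  · intro hM
    have hM' : (cs α x0 k : ℝ) ≤ -M := by exact_mod_cast hM
    have : -(α / 2 - M) ≤ xs α x0 (k+1) := by rw [e1]; nlinarith [h1.1]
    have h4 : -((z:ℝ) + 1) < cs α x0 (k+1) := by
      have := mul_le_mul_of_nonneg_left this hα.le
      linarith [h2.2]
    have : -(z + 1) < cs α x0 (k+1) := by exact_mod_cast h4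
    omega

lemma case_big {α q : ℝ} {c b : ℤ} (hp : HP α q c b) (h8 : 8 ≤ α) :
    ∃ κ : ℝ, κ < 1 / 2 ∧ Set.Icc κ (1 / 2) ⊆ specL α := by
  have hq8 : q ≤ 1/8 := by nlinarith [hp.hq, hp.h0]
  have hD : 2 * α - b = α - c * q := by rw [← hp.hb]; ring
  have hcq := abs_le.mp (show |(c:ℝ) * q| ≤ q by
    rw [abs_mul, hp.cabs, one_mul, abs_of_pos hp.h0])
  have hμ : q / (1 - q) ≤ 1/7 := by
    rw [div_le_iff₀ (by linarith)]; linarith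
  have hμ0 : 0 ≤ q / (1 - q) := div_nonneg hp.h0.le (by linarith)
  refine assemble_simple hp ((α+3)/4) ?_ ?_ (fun x0 hx σ k => hs_abs (by linarith) hx σ k)
  · rw [hD]; linarith [hcq.2]
  · rw [hD]
    have e1 : (α + 3)/4 * (q / (1 - q)) ≤ (α + 3)/4 * (1/7) := by gcongr
    have e2 : ((α - c * q) / 2 + 1/2 - (α+3)/4) * q ≤ 1/4 + q * q / 2 := by
      nlinarith [hp.hq, hp.h0, hcq.1]
    nlinarith [hcq.2, hp.h0]

lemma case_m {α q : ℝ} {c b : ℤ} (hp : HP α q c b) (M : ℤ) (hM : (α + 1) / 2 < 2 * M + 1)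
    (μ : ℝ) (hμ : q ≤ μ * (1 - q)) (hM0 : 0 ≤ M)
    (hm : M ≤ (2 * α - b) / 2 + 1/2)
    (hB : 2 * M + 4 * (M * μ) + (2 - b * q) + (1 - 2 * M) * q < 2 * α - b) :
    ∃ κ : ℝ, κ < 1 / 2 ∧ Set.Icc κ (1 / 2) ⊆ specL α := by
  refine assemble_simple hp M hm ?_ (fun x0 hx σ k => hs_int' (by linarith [hp.hα]) hx M hM σ k)
  have hμ' : q / (1 - q) ≤ μ := by rw [div_le_iff₀ (by linarith [hp.h1])]; exact hμ
  have : (M:ℝ) * (q / (1 - q)) ≤ M * μ := by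
    apply mul_le_mul_of_nonneg_left hμ'; exact_mod_cast hM0
  have hq := hp.hq
  nlinarith

/-- the case `b = 6`, `c = 1` and `b = 5`, `c = -1`: digits bounded by 2, with a loss. -/
lemma case_loss {α q : ℝ} {c b : ℤ} (hp : HP α q c b) (z : ℤ) (hα6 : α < 6) (hz0 : z ≤ 0)
    (hz : α * (α / 2 - 3) + 1/2 < z + 1) (O μ : ℝ) (hμ : q ≤ μ * (1 - q))
    (hO1 : 1 + 2 * μ ≤ O) (hO2 : 2 ≤ O) (hO3 : 2 + q * (((z:ℝ) / 2) + 2 * μ) ≤ O) (hze : z % 2 = 0)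
    (hm : (2 * α - b) / 2 + 1/2 < 4)
    (hB : 2 * O + 4 * μ + 2 * q < 2 * α - b) :
    ∃ κ : ℝ, κ < 1 / 2 ∧ Set.Icc κ (1 / 2) ⊆ specL α := by
  have hα0 : 0 < α := by linarith [hp.hα]
  have hμ' : q / (1 - q) ≤ μ := by rw [div_le_iff₀ (by linarith [hp.h1])]; exact hμ
  have hq := hp.hq
  refine assemble_unif' hp 2 O 3 (fun a0 ha => ?_) (by norm_num) (by nlinarith)
    (fun x0 hx σ k => by exact_mod_cast hs_int' hα0 hx 2 (by push_cast; linarith) σ k) ?_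
  · have h1 : |(a0:ℝ)| < 4 := ha.trans_lt hm
    have h2 : |a0| < 4 := by exact_mod_cast h1
    have h3 : |a0| ≤ 3 := by omega
    exact_mod_cast h3
  intro x0 hx J σ k
  set y := cut J (hs α x0 σ) with hy
  have hyb : ∀ k, |(y k : ℝ)| ≤ 2 :=
    cut_abs (fun k => by exact_mod_cast hs_int' hα0 hx 2 (by push_cast; linarith) σ k) J
  have hyi : |y k| ≤ 2 := by exact_mod_cast hyb k
  have hS : |SS q (fun i => (y (k + 1 + i) : ℝ))| ≤ 2 * μ :=
    (SS_abs hp.h0 hp.h1 (fun i => hyb _)).trans (by linarith)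
  have hS' : |SS q (fun i => (y (k + 1 + (i+1)) : ℝ))| ≤ 2 * μ :=
    (SS_abs hp.h0 hp.h1 (fun i => hyb _)).trans (by linarith)
  have hrec : SS q (fun i => (y (k + 1 + i) : ℝ)) =
      q * (y (k+1) + SS q (fun i => (y (k + 1 + (i+1)) : ℝ))) := by
    rw [SS_rec hp.h0 hp.h1 (fun i => hyb _)]
  have hJk : y (k+1) = hs α x0 σ (k+1) ∨ SS q (fun i => (y (k + 1 + i) : ℝ)) = 0 := by
    by_cases h : k + 1 < J
    · left; simp [hy, cut, h]
    · right
      have : ∀ i, y (k + 1 + i) = 0 := fun i => by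
        simp only [hy, cut]; rw [if_neg (by omega)]
      simp [this, SS]
  have hcn := cs_next hα0 hx 3 z (by push_cast; linarith) k
  have hycases : y k = hs α x0 σ k ∨ y k = 0 := by
    simp only [hy, cut]; split_ifs <;> simp
  rw [abs_le] at hyi hS hS'
  have h0 := hp.h0
  rcases (by omega : y k = 2 ∨ y k = -2 ∨ (-1 ≤ y k ∧ y k ≤ 1)) with h | h | h
  · have e : (y k : ℝ) = 2 := by exact_mod_cast h
    have h1 : 3 ≤ cs α x0 k := by
      have : hs α x0 σ k = 2 := by omega
      unfold hs at this; omega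
    have h2 := hcn.1 h1
    have h3 : 2 * hs α x0 σ (k+1) ≤ z := by unfold hs; omega
    rw [e]
    rcases hJk with hj | hj
    · have h4 : (y (k+1) : ℝ) ≤ (z:ℝ)/2 := by
        rw [hj]
        have : 2 * (hs α x0 σ (k+1) : ℝ) ≤ z := by exact_mod_cast h3
        linarith
      have h5 : SS q (fun i => (y (k + 1 + i) : ℝ)) ≤ q * (((z:ℝ) / 2) + 2 * μ) := by
        rw [hrec]; apply mul_le_mul_of_nonneg_left _ h0.le; linarith [hS'.2]
      rw [abs_le]; constructor <;> linarith [hS.1]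
    · rw [hj]; rw [abs_le]; constructor <;> linarith
  · have e : (y k : ℝ) = -2 := by exact_mod_cast h
    have h1 : cs α x0 k ≤ -3 := by
      have : hs α x0 σ k = -2 := by omega
      unfold hs at this; omega
    have h2 := hcn.2 h1
    have h3 : -z ≤ 2 * hs α x0 σ (k+1) := by unfold hs; omega
    rw [e]
    rcases hJk with hj | hj
    · have h4 : -((z:ℝ)/2) ≤ (y (k+1) : ℝ) := by
        rw [hj]
        have : -(z:ℝ) ≤ 2 * (hs α x0 σ (k+1) : ℝ) := by exact_mod_cast h3
        linarith
      have h5 : q * (-(((z:ℝ) / 2) + 2 * μ)) ≤ SS q (fun i => (y (k + 1 + i) : ℝ)) := by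
        rw [hrec]; apply mul_le_mul_of_nonneg_left _ h0.le; linarith [hS'.1]
      rw [abs_le]; constructor <;> linarith [hS.2]
    · rw [hj]; rw [abs_le]; constructor <;> linarith
  · have e1 : (-1:ℝ) ≤ y k := by exact_mod_cast h.1
    have e2 : (y k : ℝ) ≤ 1 := by exact_mod_cast h.2
    rw [abs_le]; constructor <;> linarith [hS.1, hS.2]

/-- No three consecutive equal nonzero digits. -/
lemma out_small {q : ℝ} (h0 : 0 < q) (h1 : q < 1) (hq3 : q < 1/3) (y : ℕ → ℤ) (hyb : ∀ k, |(y k : ℝ)| ≤ 1)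
    (hp1 : ∀ k, ¬ (y k = 1 ∧ y (k+1) = 1 ∧ y (k+2) = 1))
    (hn1 : ∀ k, ¬ (y k = -1 ∧ y (k+1) = -1 ∧ y (k+2) = -1)) (k : ℕ) :
    |(y k : ℝ) + SS q (fun i => (y (k + 1 + i) : ℝ))| ≤ 1 + q / (1 - q) - q ^ 2 := by
  set μ := q / (1 - q) with hμ
  have hμe : μ = q + q * μ := by
    rw [hμ]; have : 1 - q ≠ 0 := by linarith
    field_simp; ring
  have hμ0 : 0 < μ := div_pos h0 (by linarith)
  have hμ1 : μ < 1/2 := by rw [hμ, div_lt_iff₀ (by linarith)]; linarith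
  have hS : |SS q (fun i => (y (k + 1 + i) : ℝ))| ≤ μ := by
    simpa using SS_abs h0 h1 (C := 1) (y := fun i => (y (k + 1 + i) : ℝ)) (fun i => hyb _)
  have hS' : |SS q (fun i => (y (k + 1 + (i + 1 + 1)) : ℝ))| ≤ μ := by
    simpa using SS_abs h0 h1 (C := 1) (y := fun i => (y (k + 1 + (i+1+1)) : ℝ)) (fun i => hyb _)
  have hrec : SS q (fun i => (y (k + 1 + i) : ℝ)) =
      q * (y (k+1) + q * (y (k+2) + SS q (fun i => (y (k + 1 + (i+1+1)) : ℝ)))) := by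
    rw [SS_rec h0 h1 (fun i => hyb _), SS_rec h0 h1 (fun i => hyb _)]
  have hi : ∀ k, |y k| ≤ 1 := fun k => by exact_mod_cast hyb k
  have a0 := abs_le.mp (hi k)
  have a1 := abs_le.mp (hi (k+1))
  have a2 := abs_le.mp (hi (k+2))
  have b1 := abs_le.mp (hyb (k+1))
  have b2 := abs_le.mp (hyb (k+2))
  rw [abs_le] at hS hS'
  have e2 : μ = q + q^2 + q^2 * μ := by nlinarith
  have hqq : 0 < q^2 := by positivity
  have hq2 : q^2 < q := by nlinarith
  rcases (by omega : y k = 1 ∨ y k = -1 ∨ y k = 0) with h | h | h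
  · have e : (y k : ℝ) = 1 := by exact_mod_cast h
    have hh := hp1 k
    have : SS q (fun i => (y (k + 1 + i) : ℝ)) ≤ μ - q^2 := by
      rw [hrec]
      rcases (by omega : y (k+1) ≤ 0 ∨ y (k+2) ≤ 0) with h2 | h2
      · have : (y (k+1) : ℝ) ≤ 0 := by exact_mod_cast h2
        nlinarith [b2.2, hS'.2]
      · have : (y (k+2) : ℝ) ≤ 0 := by exact_mod_cast h2
        nlinarith [b1.2, hS'.2]
    rw [e, abs_le]; constructor <;> linarith [hS.1]
  · have e : (y k : ℝ) = -1 := by exact_mod_cast h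
    have hh := hn1 k
    have : -(μ - q^2) ≤ SS q (fun i => (y (k + 1 + i) : ℝ)) := by
      rw [hrec]
      rcases (by omega : 0 ≤ y (k+1) ∨ 0 ≤ y (k+2)) with h2 | h2
      · have : 0 ≤ (y (k+1) : ℝ) := by exact_mod_cast h2
        nlinarith [b2.1, hS'.1]
      · have : 0 ≤ (y (k+2) : ℝ) := by exact_mod_cast h2
        nlinarith [b1.1, hS'.1]
    rw [e, abs_le]; constructor <;> linarith [hS.2]
  · have e : (y k : ℝ) = 0 := by exact_mod_cast h
    rw [e, abs_le]; constructor <;> linarith [hS.1, hS.2]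

lemma abs_step {q u v U V : ℝ} (h0 : 0 < q) (hu : |u| ≤ U) (hv : |v| ≤ V) :
    |q * (u + v)| ≤ q * (U + V) := by
  rw [abs_mul, abs_of_pos h0]
  exact mul_le_mul_of_nonneg_left ((abs_add_le _ _).trans (add_le_add hu hv)) h0.le

/-- Small patterns. -/
lemma small_bound {α q : ℝ} {c b : ℤ} (hp : HP α q c b) (f g : ℕ → ℤ) (hq3 : q < 1/3)
    (hf : ∀ k, |(f k : ℝ)| ≤ 1) (hg : ∀ k, |(g k : ℝ)| ≤ 1)
    (hf3 : ∀ k, ¬ (f k = 1 ∧ f (k+1) = 1 ∧ f (k+2) = 1))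
    (hf3' : ∀ k, ¬ (f k = -1 ∧ f (k+1) = -1 ∧ f (k+2) = -1))
    (hg3 : ∀ k, ¬ (g k = 1 ∧ g (k+1) = 1 ∧ g (k+2) = 1))
    (hg3' : ∀ k, ¬ (g k = -1 ∧ g (k+1) = -1 ∧ g (k+2) = -1))
    (f0 : f 0 = -1) (f1 : f 1 = 0 ∨ f 1 = 1) (f2 : f 2 = 0) (g0 : g 0 = 0) (g1 : g 1 = 0)
    (μ B : ℝ) (hμ : μ = q / (1 - q))
    (B1 : 1 + μ - q ^ 2 + (μ + q ^ 4) ≤ B) (B2 : μ + (μ + q) ≤ B)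
    (B3 : 1 + 2 * q + 2 * q ^ 2 * μ ≤ B) (B4 : 1 + q * μ + q + 2 * q ^ 2 + q ^ 2 * μ ≤ B)
    (B5 : 1 + μ + 2 * q ^ 3 + q ^ 3 * μ ≤ B) (k : ℕ) :
    |EE q c (pat 2 c f g) ((k:ℤ) + 1)| ≤ B ∧ |EE q c (pat 2 c f g) (-((k:ℤ) + 1))| ≤ B := by
  have h0 := hp.h0
  have h1 := hp.h1
  have hμ0 : 0 < μ := by rw [hμ]; exact div_pos h0 (by linarith)
  have ha : |((2:ℤ):ℝ)| ≤ 2 := by norm_num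
  have h12 : (1:ℝ) ≤ 2 := by norm_num
  have hpa := fun n => pat_abs hp h12 ha hf hg n
  have hpc : ∀ (i : ℕ) n, |(c:ℝ)^i * (pat 2 c f g n : ℝ)| ≤ 2 := fun i n => by
    rw [cpow_abs hp.cabs]; exact (hpa n).1
  have hqk : ∀ j : ℕ, q ^ (j + 1) ≤ q := fun j => by
    rw [pow_succ]; nlinarith [pow_le_one₀ (n := j) h0.le h1.le]
  have Sf : ∀ k, |SS q (fun i => (f (k + 1 + i) : ℝ))| ≤ μ := fun k => by
    simpa [hμ] using SS_abs h0 h1 (C := 1) (y := fun i => (f (k + 1 + i) : ℝ)) (fun i => hf _)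
  have Sg : ∀ k, |SS q (fun i => (g (k + 1 + i) : ℝ))| ≤ μ := fun k => by
    simpa [hμ] using SS_abs h0 h1 (C := 1) (y := fun i => (g (k + 1 + i) : ℝ)) (fun i => hg _)
  have zf : ∀ k, f k = 0 → |EE q c (pat 2 c f g) ((k:ℤ) + 1)| ≤ B := fun k hk => by
    have := EE_pos hp h12 ha hf hg k (O := μ) (by rw [hk]; simpa using Sf k)
    rw [← hμ] at this
    linarith [hqk k]
  have zg : ∀ k, g k = 0 → |EE q c (pat 2 c f g) (-((k:ℤ) + 1))| ≤ B := fun k hk => by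
    have := EE_neg hp h12 ha hf hg k (O := μ) (by rw [hk]; simpa using Sg k)
    rw [← hμ] at this
    linarith [hqk k]
  have p1 : pat 2 c f g (-1) = 0 := by rw [pat_neg _ _ _ _ _ 0 (by norm_num), g0]; simp
  have p2 : pat 2 c f g (-2) = 0 := by rw [pat_neg _ _ _ _ _ 1 (by norm_num), g1]; simp
  have q1 : pat 2 c f g 1 = -1 := by rw [pat_pos _ _ _ _ _ 0 (by norm_num), f0]
  rcases (by omega : k = 0 ∨ k = 1 ∨ k = 2 ∨ 3 ≤ k) with rfl | rfl | rfl | hk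
  · refine ⟨?_, zg 0 g0⟩
    unfold EE
    rw [pat_out_pos, pat_pos _ _ _ _ _ 0 rfl, f0]
    rw [SS_rec h0 h1 (y := fun i => (f (0 + 1 + i) : ℝ)) (fun i => hf _),
      SS_rec h0 h1 (y := fun i => (f (0 + 1 + (i + 1)) : ℝ)) (fun i => hf _),
      SS_rec h0 h1 (y := fun i => (c:ℝ)^(i+1) * (pat 2 c f g (((0:ℕ):ℤ) + 1 - 1 - i) : ℝ)) (fun i => hpc _ _),
      SS_rec h0 h1 (y := fun i => (c:ℝ)^(i+1+1) * (pat 2 c f g (((0:ℕ):ℤ) + 1 - 1 - ((i+1:ℕ):ℤ)) : ℝ)) (fun i => hpc _ _)]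
    have u1 : |SS q (fun i => (f (0 + 1 + (i + 1 + 1)) : ℝ))| ≤ μ := by
      simpa [hμ] using SS_abs h0 h1 (C := 1) (y := fun i => (f (0 + 1 + (i+1+1)) : ℝ)) (fun i => hf _)
    have u2 : |SS q (fun i => (c:ℝ)^(i+1+1+1) * (pat 2 c f g (((0:ℕ):ℤ) + 1 - 1 - ((i+1+1:ℕ):ℤ)) : ℝ))| ≤ μ := by
      have := SS_abs h0 h1 (C := 1) (y := fun i => (c:ℝ)^(i+1+1+1) * (pat 2 c f g (((0:ℕ):ℤ) + 1 - 1 - ((i+1+1:ℕ):ℤ)) : ℝ))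
        (fun i => by rw [cpow_abs hp.cabs]; exact (hpa _).2 (by push_cast; omega))
      simpa [hμ] using this
    generalize SS q (fun i => (f (0 + 1 + (i + 1 + 1)) : ℝ)) = s1 at *
    generalize SS q (fun i => (c:ℝ)^(i+1+1+1) * (pat 2 c f g (((0:ℕ):ℤ) + 1 - 1 - ((i+1+1:ℕ):ℤ)) : ℝ)) = s2 at *
    have r1 : pat 2 c f g (((0:ℕ):ℤ) + 1 - 1 - ((0:ℕ):ℤ)) = 2 := by simp [pat_zero]
    have r2 : pat 2 c f g (((0:ℕ):ℤ) + 1 - 1 - ((0+1:ℕ):ℤ)) = 0 := by rw [← p1]; congr 1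
    have r3 : f (0 + 1 + 0) = f 1 := rfl
    have r4 : f (0 + 1 + (0 + 1)) = 0 := f2
    rw [r1, r2, r3, r4]
    have v1 : |q ^ 2 * s1| ≤ q ^ 2 * μ := by
      rw [abs_mul, abs_of_pos (by positivity)]; gcongr
    have v2 : |q ^ 2 * s2| ≤ q ^ 2 * μ := by
      rw [abs_mul, abs_of_pos (by positivity)]; gcongr
    rw [abs_le] at v1 v2 ⊢
    have hq2 : 0 < q ^ 2 * μ := by positivity
    rcases hp.hc with rfl | rfl <;> rcases f1 with f1 | f1 <;> rw [f1] <;> push_cast <;>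
      constructor <;> nlinarith [v1.1, v1.2, v2.1, v2.2]
  · refine ⟨?_, zg 1 g1⟩
    unfold EE
    rw [pat_out_pos, pat_pos _ _ _ _ _ 1 rfl]
    rw [SS_rec h0 h1 (y := fun i => (f (1 + 1 + i) : ℝ)) (fun i => hf _),
      SS_rec h0 h1 (y := fun i => (c:ℝ)^(i+1) * (pat 2 c f g (((1:ℕ):ℤ) + 1 - 1 - i) : ℝ)) (fun i => hpc _ _),
      SS_rec h0 h1 (y := fun i => (c:ℝ)^(i+1+1) * (pat 2 c f g (((1:ℕ):ℤ) + 1 - 1 - ((i+1:ℕ):ℤ)) : ℝ)) (fun i => hpc _ _)]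
    have u1 : |SS q (fun i => (f (1 + 1 + (i + 1)) : ℝ))| ≤ μ := by
      simpa [hμ] using SS_abs h0 h1 (C := 1) (y := fun i => (f (1 + 1 + (i+1)) : ℝ)) (fun i => hf _)
    have u2 : |SS q (fun i => (c:ℝ)^(i+1+1+1) * (pat 2 c f g (((1:ℕ):ℤ) + 1 - 1 - ((i+1+1:ℕ):ℤ)) : ℝ))| ≤ μ := by
      have := SS_abs h0 h1 (C := 1) (y := fun i => (c:ℝ)^(i+1+1+1) * (pat 2 c f g (((1:ℕ):ℤ) + 1 - 1 - ((i+1+1:ℕ):ℤ)) : ℝ))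
        (fun i => by rw [cpow_abs hp.cabs]; exact (hpa _).2 (by push_cast; omega))
      simpa [hμ] using this
    have r1 : |(c:ℝ)^(0+1) * (pat 2 c f g (((1:ℕ):ℤ) + 1 - 1 - ((0:ℕ):ℤ)) : ℝ)| ≤ 1 := by
      rw [cpow_abs hp.cabs]; exact (hpa _).2 (by norm_num)
    have r2 := hpc (0+1+1) (((1:ℕ):ℤ) + 1 - 1 - ((0+1:ℕ):ℤ))
    have r4 : f (1 + 1 + 0) = 0 := f2
    rw [r4]
    have w1 := abs_step h0 (u := ((0:ℤ):ℝ)) (U := 0) (by simp) u1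
    have w2 := abs_step h0 r1 (abs_step h0 r2 u2)
    refine (abs_add_le _ _).trans ((add_le_add (abs_add_le _ _) w2).trans ?_)
    have := hf 1
    nlinarith [w1]
  · refine ⟨zf 2 f2, ?_⟩
    unfold EE
    rw [pat_out_neg hp, pat_neg _ _ _ _ _ 2 rfl]
    rw [SS_rec h0 h1 (y := fun i => (pat 2 c f g (-(((2:ℕ):ℤ) + 1) + 1 + i) : ℝ)) (fun i => (hpa _).1),
      SS_rec h0 h1 (y := fun i => (pat 2 c f g (-(((2:ℕ):ℤ) + 1) + 1 + ((i+1:ℕ):ℤ)) : ℝ)) (fun i => (hpa _).1),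
      SS_rec h0 h1 (y := fun i => (pat 2 c f g (-(((2:ℕ):ℤ) + 1) + 1 + ((i+1+1:ℕ):ℤ)) : ℝ)) (fun i => (hpa _).1)]
    have u2 : |SS q (fun i => (pat 2 c f g (-(((2:ℕ):ℤ) + 1) + 1 + ((i+1+1+1:ℕ):ℤ)) : ℝ))| ≤ μ := by
      have := SS_abs h0 h1 (C := 1) (y := fun i => (pat 2 c f g (-(((2:ℕ):ℤ) + 1) + 1 + ((i+1+1+1:ℕ):ℤ)) : ℝ))
        (fun i => (hpa _).2 (by push_cast; omega))
      simpa [hμ] using this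
    have r1 : pat 2 c f g (-(((2:ℕ):ℤ) + 1) + 1 + ((0:ℕ):ℤ)) = 0 := by rw [← p2]; congr 1
    have r2 : pat 2 c f g (-(((2:ℕ):ℤ) + 1) + 1 + ((0+1:ℕ):ℤ)) = 0 := by rw [← p1]; congr 1
    have r3 := (hpa (-(((2:ℕ):ℤ) + 1) + 1 + ((0+1+1:ℕ):ℤ))).1
    rw [r1, r2]
    have w2 := abs_step h0 (u := ((0:ℤ):ℝ)) (U := 0) (by simp)
      (abs_step h0 (u := ((0:ℤ):ℝ)) (U := 0) (by simp) (abs_step h0 r3 u2))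
    have w1 : |(c:ℝ) ^ (2+1) * SS q (fun i => (g (2 + 1 + i) : ℝ))| ≤ μ := by
      rw [cpow_abs hp.cabs]; exact Sg 2
    have w0 : |((c ^ (2+1) * g 2 : ℤ) : ℝ)| ≤ 1 := by
      push_cast; rw [cpow_abs hp.cabs]; exact hg 2
    refine (abs_add_le _ _).trans ((add_le_add ((abs_add_le _ _).trans (add_le_add w0 w2)) w1).trans ?_)
    nlinarith
  · have hqk4 : q ^ (k+1) ≤ q ^ 4 := pow_le_pow_of_le_one h0.le h1.le (by omega)
    constructor
    · have := EE_pos hp h12 ha hf hg k (out_small h0 h1 hq3 f hf hf3 hf3' k)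
      rw [← hμ] at this; linarith
    · have := EE_neg hp h12 ha hf hg k (out_small h0 h1 hq3 g hg hg3 hg3' k)
      rw [← hμ] at this; linarith

lemma case_small {α q : ℝ} {c b : ℤ} (hp : HP α q c b) (hα4 : α < 4)
    (hz : α * (α / 2 - 2) ≤ -1/2) (T0 : ℝ) (hT : T0 < 1/2)
    (μ : ℝ) (hμ : μ = q / (1 - q)) (B : ℝ) (hB : 2 * B < 2 * α - b)
    (B1 : 1 + μ - q ^ 2 + (μ + q ^ 4) ≤ B) (B2 : μ + (μ + q) ≤ B)
    (B3 : 1 + 2 * q + 2 * q ^ 2 * μ ≤ B) (B4 : 1 + q * μ + q + 2 * q ^ 2 + q ^ 2 * μ ≤ B)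
    (B5 : 1 + μ + 2 * q ^ 3 + q ^ 3 * μ ≤ B)
    (H : ∀ t, T0 ≤ t → t ≤ 1/2 → ∀ a0 : ℤ, ∀ x0 : ℝ, |x0| ≤ 1/2 → (2 * α - b) * t = a0 + x0 →
      a0 = 2 ∧ cs α x0 0 = -1 ∧ (cs α x0 1 = 0 ∨ cs α x0 1 = 1) ∧ (cs α x0 2 = 0 ∨ cs α x0 2 = 1)) :
    ∃ κ : ℝ, κ < 1 / 2 ∧ Set.Icc κ (1 / 2) ⊆ specL α := by
  have hα0 : 0 < α := by linarith [hp.hα]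
  have hq3 : q < 1/3 := by nlinarith [hp.hα, hp.hq, hp.h0]
  refine assemble hp B T0 hB hT 3 ?_
  intro t h1 h2 h3 a0 x0 hx hdec J hJ k
  obtain ⟨rfl, c0, c1, c2⟩ := H t h1 h3 a0 x0 hx hdec
  have hcn := fun k => cs_next hα0 hx 2 0 (by push_cast; linarith) k
  have hci := fun k => abs_le.mp (hs_int hα0 hx 1 (by push_cast; linarith) 0 k).1
  have hb1 : ∀ σ k, |(hs α x0 σ k : ℝ)| ≤ 1 := fun σ k => by
    exact_mod_cast hs_int' hα0 hx 1 (by push_cast; linarith) σ k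
  have tri : ∀ σ k, ¬ (cut J (hs α x0 σ) k = 1 ∧ cut J (hs α x0 σ) (k+1) = 1 ∧
      cut J (hs α x0 σ) (k+2) = 1) := by
    rintro σ k ⟨e1, e2, e3⟩
    unfold cut hs at *
    have d0 := (hcn k).1
    have d1 : 2 ≤ cs α x0 (k+1) → cs α x0 (k+2) ≤ 0 := (hcn (k+1)).1
    split_ifs at * <;> omega
  have tri' : ∀ σ k, ¬ (cut J (hs α x0 σ) k = -1 ∧ cut J (hs α x0 σ) (k+1) = -1 ∧
      cut J (hs α x0 σ) (k+2) = -1) := by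
    rintro σ k ⟨e1, e2, e3⟩
    unfold cut hs at *
    have d0 := (hcn k).2
    have d1 : cs α x0 (k+1) ≤ -2 → -0 ≤ cs α x0 (k+2) := (hcn (k+1)).2
    split_ifs at * <;> omega
  refine small_bound hp _ _ hq3 (cut_abs (hb1 0) J) (cut_abs (hb1 1) J) (tri 0) (tri' 0) (tri 1)
    (tri' 1) ?_ ?_ ?_ ?_ ?_ μ B hμ B1 B2 B3 B4 B5 k
  all_goals unfold cut hs
  all_goals rw [if_pos (by omega)]
  all_goals omega


lemma meas_of {α : ℝ} (h : ∃ κ : ℝ, κ < 1 / 2 ∧ Set.Icc κ (1 / 2) ⊆ specL α) :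
    0 < MeasureTheory.volume (specL α) := by
  obtain ⟨κ, h1, h2⟩ := h
  refine lt_of_lt_of_le ?_ (MeasureTheory.measure_mono h2)
  rw [Real.volume_Icc, ENNReal.ofReal_pos]; linarith

lemma int_of_lt {n m : ℤ} {y : ℝ} (h : |y - n| ≤ 1/2) (h1 : (m:ℝ) - 1/2 < y)
    (h2 : y < (m:ℝ) + 1/2) : n = m := by
  rw [abs_le] at h
  have a1 : (n:ℝ) < m + 1 := by linarith
  have a2 : (m:ℝ) < n + 1 := by linarith
  have a3 : n < m + 1 := by exact_mod_cast a1
  have a4 : m < n + 1 := by exact_mod_cast a2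
  omega

set_option maxHeartbeats 1000000 in
lemma case_p4 {α q : ℝ} (hp : HP α q 1 4) (l : 3.7320 ≤ α) (u : α ≤ 3.7321) :
    ∃ κ : ℝ, κ < 1 / 2 ∧ Set.Icc κ (1 / 2) ⊆ specL α := by
  have hb := hp.hb
  push_cast at hb
  have e : q = 4 - α := by linarith
  have hq : α * (4 - α) = 1 := by rw [← e]; exact hp.hq
  have ql : 0.2679 ≤ q := by linarith
  have qu : q ≤ 0.2680 := by linarith
  have hμu : q / (1 - q) ≤ 0.3662 := by rw [div_le_iff₀ (by linarith)]; linarith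
  have hμ0 : 0 ≤ q / (1 - q) := div_nonneg hp.h0.le (by linarith)
  have h2u : q ^ 2 ≤ 0.0719 := by nlinarith
  have h2l : 0.0717 ≤ q ^ 2 := by nlinarith
  have h3u : q ^ 3 ≤ 0.02 := by nlinarith
  have h4u : q ^ 4 ≤ 0.0053 := by nlinarith
  have h30 : 0 ≤ q ^ 3 := pow_nonneg hp.h0.le 3
  refine case_small hp (by linarith) (by nlinarith) (1/2 - 1/1000) (by norm_num) _ rfl 1.7
    (by push_cast; linarith) ?_ ?_ ?_ ?_ ?_ ?_
  · nlinarith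
  · nlinarith
  · nlinarith
  · nlinarith
  · nlinarith
  intro t h1 h2 a0 x0 hx hd
  push_cast at hd
  obtain ⟨p, hpp⟩ : ∃ p, p = (2 * α - 4) * (1/2 - t) := ⟨_, rfl⟩
  have p0 : 0 ≤ p := by rw [hpp]; apply mul_nonneg <;> linarith
  have p1 : p ≤ 0.004 := by rw [hpp]; nlinarith
  have x1 := xs_abs (α := α) hx 1
  have x2 := xs_abs (α := α) hx 2
  have x3 := xs_abs (α := α) hx 3
  have s1 : xs α x0 1 = α * x0 - cs α x0 0 := xs_succ α x0 0
  have s2 : xs α x0 2 = α * xs α x0 1 - cs α x0 1 := xs_succ α x0 1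
  have s3 : xs α x0 3 = α * xs α x0 2 - cs α x0 2 := xs_succ α x0 2
  have ha : a0 = 2 := by
    refine int_of_lt (y := (2 * α - 4) * t) ?_ ?_ ?_
    · rw [hd]; simpa using hx
    · push_cast; linarith
    · push_cast; linarith
  subst ha
  push_cast at hd
  have ex : x0 = α - 4 - p := by linarith
  have ap0 : 0 ≤ α * p := by positivity
  have ap1 : α * p ≤ 0.015 := by nlinarith
  have ap20 : 0 ≤ α * (α * p) := by positivity
  have ap21 : α * (α * p) ≤ 0.06 := by nlinarith
  have ap30 : 0 ≤ α * (α * (α * p)) := by positivity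
  have ap31 : α * (α * (α * p)) ≤ 0.3 := by nlinarith
  have k0 : α * x0 = -1 - α * p := by rw [ex]; linear_combination -hq
  have c0 : cs α x0 0 = -1 := by
    rw [s1] at x1
    refine int_of_lt x1 ?_ ?_ <;> rw [k0] <;> push_cast <;> linarith
  have f1 : xs α x0 1 = - (α * p) := by rw [s1, k0, c0]; push_cast; ring
  have k1 : α * xs α x0 1 = -(α * (α * p)) := by rw [f1]; ring
  have c1 : cs α x0 1 = 0 := by
    rw [s2] at x2
    refine int_of_lt x2 ?_ ?_ <;> rw [k1] <;> push_cast <;> linarith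
  have f2 : xs α x0 2 = - (α * (α * p)) := by rw [s2, k1, c1]; push_cast; ring
  have k2 : α * xs α x0 2 = -(α * (α * (α * p))) := by rw [f2]; ring
  have c2 : cs α x0 2 = 0 := by
    rw [s3] at x3
    refine int_of_lt x3 ?_ ?_ <;> rw [k2] <;> push_cast <;> linarith
  exact ⟨rfl, c0, Or.inl c1, Or.inl c2⟩

set_option maxHeartbeats 1000000 in
lemma case_m3 {α q : ℝ} (hp : HP α q (-1) 3) (l : 3.3027 ≤ α) (u : α ≤ 3.3028) :
    ∃ κ : ℝ, κ < 1 / 2 ∧ Set.Icc κ (1 / 2) ⊆ specL α := by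
  have hb := hp.hb
  push_cast at hb
  have e : q = α - 3 := by linarith
  have hq : α * (α - 3) = 1 := by rw [← e]; exact hp.hq
  have ql : 0.3027 ≤ q := by linarith
  have qu : q ≤ 0.3028 := by linarith
  have hμu : q / (1 - q) ≤ 0.4344 := by rw [div_le_iff₀ (by linarith)]; linarith
  have hμ0 : 0 ≤ q / (1 - q) := div_nonneg hp.h0.le (by linarith)
  have h2u : q ^ 2 ≤ 0.0917 := by nlinarith
  have h2l : 0.0916 ≤ q ^ 2 := by nlinarith
  have h3u : q ^ 3 ≤ 0.028 := by nlinarith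
  have h4u : q ^ 4 ≤ 0.0085 := by nlinarith
  have h30 : 0 ≤ q ^ 3 := pow_nonneg hp.h0.le 3
  refine case_small hp (by linarith) (by nlinarith) (1/2 - 1/1000) (by norm_num) _ rfl 1.79
    (by push_cast; linarith) ?_ ?_ ?_ ?_ ?_ ?_
  · nlinarith
  · nlinarith
  · nlinarith
  · nlinarith
  · nlinarith
  intro t h1 h2 a0 x0 hx hd
  push_cast at hd
  obtain ⟨p, hpp⟩ : ∃ p, p = (2 * α - 3) * (1/2 - t) := ⟨_, rfl⟩
  have p0 : 0 ≤ p := by rw [hpp]; apply mul_nonneg <;> linarith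
  have p1 : p ≤ 0.004 := by rw [hpp]; nlinarith
  have x1 := xs_abs (α := α) hx 1
  have x2 := xs_abs (α := α) hx 2
  have x3 := xs_abs (α := α) hx 3
  have s1 : xs α x0 1 = α * x0 - cs α x0 0 := xs_succ α x0 0
  have s2 : xs α x0 2 = α * xs α x0 1 - cs α x0 1 := xs_succ α x0 1
  have s3 : xs α x0 3 = α * xs α x0 2 - cs α x0 2 := xs_succ α x0 2
  have ha : a0 = 2 := by
    refine int_of_lt (y := (2 * α - 3) * t) ?_ ?_ ?_
    · rw [hd]; simpa using hx
    · push_cast; linarith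
    · push_cast; linarith
  subst ha
  push_cast at hd
  have ex : x0 = α - 7/2 - p := by linarith
  have ap0 : 0 ≤ α * p := by positivity
  have ap1 : α * p ≤ 0.014 := by nlinarith
  have ap20 : 0 ≤ α * (α * p) := by positivity
  have ap21 : α * (α * p) ≤ 0.05 := by nlinarith
  have ap30 : 0 ≤ α * (α * (α * p)) := by positivity
  have ap31 : α * (α * (α * p)) ≤ 0.2 := by nlinarith
  have k0 : α * x0 = 1 - α / 2 - α * p := by rw [ex]; linear_combination hq
  have c0 : cs α x0 0 = -1 := by
    rw [s1] at x1
    refine int_of_lt x1 ?_ ?_ <;> rw [k0] <;> push_cast <;> linarith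
  have f1 : xs α x0 1 = 2 - α / 2 - (α * p) := by rw [s1, k0, c0]; push_cast; ring
  have k1 : α * xs α x0 1 = α / 2 - 1 / 2 - α * (α * p) := by rw [f1]; linear_combination (-1/2) * hq
  have c1 : cs α x0 1 = 1 := by
    rw [s2] at x2
    refine int_of_lt x2 ?_ ?_ <;> rw [k1] <;> push_cast <;> linarith
  have f2 : xs α x0 2 = α / 2 - 3 / 2 - (α * (α * p)) := by
    rw [s2, k1, c1]; push_cast; ring
  have g : α * xs α x0 2 = 1/2 - α * (α * (α * p)) := by rw [f2]; linear_combination (1/2) * hq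
  rw [s3, g, abs_le] at x3
  have g1 : (cs α x0 2 : ℝ) < 2 := by linarith
  have g2 : (-1 : ℝ) < cs α x0 2 := by linarith
  have g3 : cs α x0 2 < 2 := by exact_mod_cast g1
  have g4 : -1 < cs α x0 2 := by exact_mod_cast g2
  exact ⟨rfl, c0, Or.inr c1, by omega⟩

lemma case_pos (b : ℤ) (α : ℝ) (hb : 4 ≤ b) (h : α = ((b : ℝ) + Real.sqrt ((b : ℝ) ^ 2 - 4)) / 2) :
    ∃ κ : ℝ, κ < 1 / 2 ∧ Set.Icc κ (1 / 2) ⊆ specL α := by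
  have hb' : (4:ℝ) ≤ b := by exact_mod_cast hb
  have s0 := Real.sqrt_nonneg ((b : ℝ) ^ 2 - 4)
  have s1 := Real.sq_sqrt (show 0 ≤ (b : ℝ) ^ 2 - 4 by nlinarith)
  have hs : Real.sqrt ((b : ℝ) ^ 2 - 4) = 2 * α - b := by rw [h]; ring
  rw [hs] at s0 s1
  have hq : α * (b - α) = 1 := by nlinarith
  have hα : (b:ℝ) - 1/2 < α := by nlinarith
  have hlt : α < b := by nlinarith
  have hp : HP α (b - α) 1 b := ⟨by linarith, by linarith, hq, Or.inl rfl, by push_cast; ring, by linarith⟩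
  rcases (by omega : b = 4 ∨ b = 5 ∨ b = 6 ∨ b = 7 ∨ b = 8 ∨ 9 ≤ b) with rfl | rfl | rfl | rfl | rfl | h9
  · push_cast at *
    exact case_p4 hp (by nlinarith) (by nlinarith)
  · push_cast at *
    have l : 4.791 ≤ α := by nlinarith
    have u : α ≤ 4.792 := by nlinarith
    exact case_m hp 1 (by push_cast; linarith) 0.265 (by linarith) (by norm_num)
      (by push_cast; linarith) (by push_cast; linarith)
  · push_cast at *
    have l : 5.828 ≤ α := by nlinarith
    have u : α ≤ 5.829 := by nlinarith
    exact case_loss hp 0 (by linarith) le_rfl (by push_cast; nlinarith) 2.073 0.208 (by linarith)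
      (by norm_num) (by norm_num) (by push_cast; linarith) (by norm_num)
      (by push_cast; linarith) (by push_cast; linarith)
  · push_cast at *
    have l : 6.854 ≤ α := by nlinarith
    have u : α ≤ 6.855 := by nlinarith
    exact case_m hp 2 (by push_cast; linarith) 0.172 (by linarith) (by norm_num)
      (by push_cast; linarith) (by push_cast; linarith)
  · push_cast at *
    have l : 7.872 ≤ α := by nlinarith
    have u : α ≤ 7.874 := by nlinarith
    exact case_m hp 2 (by push_cast; linarith) 0.148 (by linarith) (by norm_num)
      (by push_cast; linarith) (by push_cast; linarith)
  · have : (9:ℝ) ≤ b := by exact_mod_cast h9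
    exact case_big hp (by linarith)

lemma case_neg (b : ℤ) (α : ℝ) (hb : 3 ≤ b) (h : α = ((b : ℝ) + Real.sqrt ((b : ℝ) ^ 2 + 4)) / 2) :
    ∃ κ : ℝ, κ < 1 / 2 ∧ Set.Icc κ (1 / 2) ⊆ specL α := by
  have hb' : (3:ℝ) ≤ b := by exact_mod_cast hb
  have s0 := Real.sqrt_nonneg ((b : ℝ) ^ 2 + 4)
  have s1 := Real.sq_sqrt (show 0 ≤ (b : ℝ) ^ 2 + 4 by positivity)
  have hs : Real.sqrt ((b : ℝ) ^ 2 + 4) = 2 * α - b := by rw [h]; ring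
  rw [hs] at s0 s1
  have hq : α * (α - b) = 1 := by nlinarith
  have hα : (b:ℝ) < α := by nlinarith
  have hlt : α < b + 1/2 := by nlinarith
  have hp : HP α (α - b) (-1) b := ⟨by linarith, by linarith, hq, Or.inr rfl, by push_cast; ring, by linarith⟩
  rcases (by omega : b = 3 ∨ b = 4 ∨ b = 5 ∨ b = 6 ∨ b = 7 ∨ 8 ≤ b) with rfl | rfl | rfl | rfl | rfl | h9
  · push_cast at *
    exact case_m3 hp (by nlinarith) (by nlinarith)
  · push_cast at *
    have l : 4.236 ≤ α := by nlinarith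
    have u : α ≤ 4.237 := by nlinarith
    exact case_m hp 1 (by push_cast; linarith) 0.311 (by linarith) (by norm_num)
      (by push_cast; linarith) (by push_cast; linarith)
  · push_cast at *
    have l : 5.192 ≤ α := by nlinarith
    have u : α ≤ 5.193 := by nlinarith
    exact case_loss hp (-2) (by linarith) (by norm_num) (by push_cast; nlinarith) 2 0.2393 (by linarith)
      (by norm_num) (by norm_num) (by push_cast; linarith) (by norm_num)
      (by push_cast; linarith) (by push_cast; linarith)
  · push_cast at *
    have l : 6.162 ≤ α := by nlinarith
    have u : α ≤ 6.163 := by nlinarith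
    exact case_m hp 2 (by push_cast; linarith) 0.195 (by linarith) (by norm_num)
      (by push_cast; linarith) (by push_cast; linarith)
  · push_cast at *
    have l : 7.140 ≤ α := by nlinarith
    have u : α ≤ 7.141 := by nlinarith
    exact case_m hp 2 (by push_cast; linarith) 0.165 (by linarith) (by norm_num)
      (by push_cast; linarith) (by push_cast; linarith)
  · have : (8:ℝ) ≤ b := by exact_mod_cast h9
    exact case_big hp (by linarith)

theorem stmt19 (b : ℤ) (α : ℝ)
    (h : (4 ≤ b ∧ α = ((b : ℝ) + Real.sqrt ((b : ℝ) ^ 2 - 4)) / 2) ∨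
         (3 ≤ b ∧ α = ((b : ℝ) + Real.sqrt ((b : ℝ) ^ 2 + 4)) / 2)) :
    (∃ κ : ℝ, κ < 1 / 2 ∧ Set.Icc κ (1 / 2) ⊆ specL α) ∧
    0 < MeasureTheory.volume (specL α) := by
  have key : ∃ κ : ℝ, κ < 1 / 2 ∧ Set.Icc κ (1 / 2) ⊆ specL α := by
    rcases h with ⟨h1, h2⟩ | ⟨h1, h2⟩
    · exact case_pos b α h1 h2
    · exact case_neg b α h1 h2
  exact ⟨key, meas_of key⟩
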